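/- Anderson's inequality: if X is a centered Gaussian random vector in ℝ^d and C ⊆ ℝ^d is a symmetric convex Borel set, then for every x ∈ ℝ^d, P{X + x ∈ C} ≤ P{X ∈ C}. -/

import Mathlib

open MeasureTheory ProbabilityTheory NNReal

/-!
A centered Gaussian measure `μ` on a finite-dimensional space is log-concave in the functional sense
of the Prékopa–Leindler inequality. On the line this comes from the Brunn–Minkowski inequality
applied to superlevel sets and from the log-concavity of the Gaussian density; the property then
passes to products and to affine images, hence to every Gaussian measure. For convex `C = -C` and
`A = C - x`, symmetry gives `½ A + ½ (-A) ⊆ C` and `μ (-A) = μ A`, so log-concavity yields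
`μ A = μ A ^ ½ * μ (-A) ^ ½ ≤ μ C`.
-/

section PrekopaLeindler

open Set
open scoped ENNReal Pointwise

section BrunnMinkowskiReal

theorem volume_add_volume_le_volume_add_of_isCompact {K L : Set ℝ} (hK : IsCompact K)
    (hL : IsCompact L) (hKne : K.Nonempty) (hLne : L.Nonempty) :
    volume K + volume L ≤ volume (K + L) := by
  obtain ⟨a, haK, ha⟩ := hK.exists_isGreatest hKne
  obtain ⟨b, hbL, hb⟩ := hL.exists_isLeast hLne
  -- `K + min L` and `max K + L` are translates meeting only at `max K + min L`.
  have hdisj : AEDisjoint volume (b +ᵥ K) (a +ᵥ L) := by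
    refine measure_mono_null (t := {a + b}) ?_ Real.volume_singleton
    rintro _ ⟨⟨k, hk, rfl⟩, ⟨l, hl, hkl⟩⟩
    have hka : k ≤ a := ha hk
    have hbl : b ≤ l := hb hl
    simp only [vadd_eq_add] at hkl ⊢
    rw [mem_singleton_iff]
    linarith
  calc volume K + volume L
      = volume ((b +ᵥ K) ∪ (a +ᵥ L)) := by
        rw [measure_union₀ (hL.vadd a).measurableSet.nullMeasurableSet hdisj, measure_vadd,
          measure_vadd]
    _ ≤ volume (K + L) := by
        refine measure_mono (union_subset ?_ ?_)
        · rintro _ ⟨k, hk, rfl⟩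
          exact ⟨k, hk, b, hbL, add_comm k b⟩
        · rintro _ ⟨l, hl, rfl⟩
          exact ⟨a, haK, l, hl, rfl⟩

theorem volume_add_volume_le_volume_add {A B : Set ℝ} (hA : MeasurableSet A)
    (hB : MeasurableSet B) (hAne : A.Nonempty) (hBne : B.Nonempty) :
    volume A + volume B ≤ volume (A + B) := by
  obtain ⟨a, ha⟩ := hAne
  obtain ⟨b, hb⟩ := hBne
  rw [hA.measure_eq_iSup_isCompact, hB.measure_eq_iSup_isCompact]
  simp only [iSup_and']
  refine ENNReal.biSup_add_biSup_le' ⟨∅, empty_subset A, isCompact_empty⟩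
    ⟨∅, empty_subset B, isCompact_empty⟩ ?_
  rintro K ⟨hKA, hK⟩ L ⟨hLB, hL⟩
  calc volume K + volume L
      ≤ volume (insert a K) + volume (insert b L) := by gcongr <;> exact subset_insert _ _
    _ ≤ volume (insert a K + insert b L) :=
        volume_add_volume_le_volume_add_of_isCompact (hK.insert a) (hL.insert b)
          (insert_nonempty a K) (insert_nonempty b L)
    _ ≤ volume (A + B) :=
        measure_mono (add_subset_add (insert_subset ha hKA) (insert_subset hb hLB))

theorem ofReal_mul_volume_add_le_volume_smul_add_smul {p q : ℝ} (hp : 0 < p) (hq : 0 < q)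
    {A B : Set ℝ} (hA : MeasurableSet A) (hB : MeasurableSet B) (hAne : A.Nonempty)
    (hBne : B.Nonempty) :
    ENNReal.ofReal p * volume A + ENNReal.ofReal q * volume B ≤ volume (p • A + q • B) := by
  have volume_smul {r : ℝ} (hr : 0 < r) (S : Set ℝ) :
      volume (r • S) = ENNReal.ofReal r * volume S := by
    rw [Measure.addHaar_smul, Module.finrank_self, pow_one, abs_of_pos hr]
  rw [← volume_smul hp, ← volume_smul hq]
  exact volume_add_volume_le_volume_add (hA.const_smul₀ p) (hB.const_smul₀ q)
    hAne.smul_set hBne.smul_set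

end BrunnMinkowskiReal

theorem lintegral_eq_setLIntegral_meas_ofReal_lt {α : Type*} [MeasurableSpace α] {μ : Measure α}
    [SFinite μ] {f : α → ℝ≥0∞} (hf : Measurable f) :
    ∫⁻ x, f x ∂μ = ∫⁻ t in Ioi (0 : ℝ), μ {x | ENNReal.ofReal t < f x} := by
  have hS : MeasurableSet {z : α × ℝ | ENNReal.ofReal z.2 < f z.1} :=
    measurableSet_lt (by fun_prop) (by fun_prop)
  have volume_section (y : ℝ≥0∞) :
      volume.restrict (Ioi 0) {t : ℝ | ENNReal.ofReal t < y} = y := by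
    rw [Measure.restrict_apply (measurableSet_lt (by fun_prop) measurable_const)]
    induction y with
    | top => simp [ENNReal.ofReal_lt_top]
    | coe y =>
      have : {t : ℝ | ENNReal.ofReal t < y} ∩ Ioi 0 = Ioo 0 (y : ℝ) := by
        ext t
        simp only [mem_inter_iff, mem_ofPred_eq, mem_Ioi, mem_Ioo, and_comm (b := 0 < t)]
        refine and_congr_right fun ht => ?_
        rw [ENNReal.ofReal_lt_iff_lt_toReal ht.le ENNReal.coe_ne_top, ENNReal.coe_toReal]
      rw [this, Real.volume_Ioo, sub_zero, ENNReal.ofReal_coe_nnreal]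
  calc ∫⁻ x, f x ∂μ
      = (μ.prod (volume.restrict (Ioi 0))) {z : α × ℝ | ENNReal.ofReal z.2 < f z.1} := by
        rw [Measure.prod_apply hS]
        exact lintegral_congr fun x => (volume_section (f x)).symm
    _ = ∫⁻ t in Ioi (0 : ℝ), μ {x | ENNReal.ofReal t < f x} := Measure.prod_apply_symm hS

theorem lintegral_eq_iSup_lintegral_min_natCast {α : Type*} [MeasurableSpace α] {μ : Measure α}
    {f : α → ℝ≥0∞} (hf : Measurable f) :
    ∫⁻ x, f x ∂μ = ⨆ n : ℕ, ∫⁻ x, min (f x) n ∂μ := by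
  have iSup_min (x : α) : ⨆ n : ℕ, min (f x) n = f x := by
    rw [← inf_iSup_eq, ENNReal.iSup_natCast, inf_top_eq]
  rw [← lintegral_iSup (f := fun (n : ℕ) x => min (f x) n) (fun n => by fun_prop)
    fun m n hmn x => min_le_min_left _ (Nat.cast_le.2 hmn)]
  exact lintegral_congr fun x => (iSup_min x).symm

theorem rpow_mul_rpow_le_ofReal_mul_add {p q : ℝ} (hp : 0 < p) (hq : 0 < q) (hpq : p + q = 1)
    (u v : ℝ≥0∞) : u ^ p * v ^ q ≤ ENNReal.ofReal p * u + ENNReal.ofReal q * v := by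
  have hconj : p⁻¹.HolderConjugate q⁻¹ := Real.holderConjugate_iff.2
    ⟨(one_lt_inv₀ hp).2 (by linarith), by rw [inv_inv, inv_inv, hpq]⟩
  have hyoung := ENNReal.young_inequality (u ^ p) (v ^ q) hconj
  rwa [ENNReal.rpow_rpow_inv hp.ne', ENNReal.rpow_rpow_inv hq.ne', ENNReal.ofReal_inv_of_pos hp,
    ENNReal.ofReal_inv_of_pos hq, div_eq_mul_inv, div_eq_mul_inv, inv_inv, inv_inv,
    mul_comm u, mul_comm v] at hyoung

theorem min_le_rpow_mul_rpow {p q : ℝ} (hp : 0 < p) (hq : 0 < q) (hpq : p + q = 1)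
    (u v : ℝ≥0∞) : min u v ≤ u ^ p * v ^ q :=
  calc min u v = min u v ^ p * min u v ^ q := by
        rw [← ENNReal.rpow_add_of_nonneg p q hp.le hq.le, hpq, ENNReal.rpow_one]
    _ ≤ u ^ p * v ^ q := by
        gcongr
        exacts [min_le_left u v, min_le_right u v]

section PrekopaLeindlerReal

variable {p q : ℝ} {f g h : ℝ → ℝ≥0∞}

theorem ofReal_mul_lintegral_add_le_lintegral_of_iSup_eq_one (hp : 0 < p) (hq : 0 < q)
    (hf : Measurable f) (hg : Measurable g) (hh : Measurable h)
    (hf_sup : ⨆ x, f x = 1) (hg_sup : ⨆ x, g x = 1)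
    (hfgh : ∀ x y, min (f x) (g y) ≤ h (p • x + q • y)) :
    ENNReal.ofReal p * (∫⁻ x, f x) + ENNReal.ofReal q * (∫⁻ x, g x) ≤ ∫⁻ x, h x := by
  rw [lintegral_eq_setLIntegral_meas_ofReal_lt hf, lintegral_eq_setLIntegral_meas_ofReal_lt hg,
    lintegral_eq_setLIntegral_meas_ofReal_lt hh, ← lintegral_const_mul' _ _ ENNReal.ofReal_ne_top,
    ← lintegral_const_mul' _ _ ENNReal.ofReal_ne_top]
  refine (le_lintegral_add _ _).trans (lintegral_mono fun t => ?_)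
  rcases lt_or_ge (ENNReal.ofReal t) 1 with ht | ht
  · have superlevel_nonempty {k : ℝ → ℝ≥0∞} (hk : ⨆ x, k x = 1) :
        {x | ENNReal.ofReal t < k x}.Nonempty := lt_iSup_iff.1 (ht.trans_eq hk.symm)
    have hsub : p • {x | ENNReal.ofReal t < f x} + q • {x | ENNReal.ofReal t < g x} ⊆
        {x | ENNReal.ofReal t < h x} := by
      rintro _ ⟨_, ⟨x, hx, rfl⟩, _, ⟨y, hy, rfl⟩, rfl⟩
      exact (lt_min hx hy).trans_le (hfgh x y)
    exact (ofReal_mul_volume_add_le_volume_smul_add_smul hp hq (hf measurableSet_Ioi)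
      (hg measurableSet_Ioi) (superlevel_nonempty hf_sup) (superlevel_nonempty hg_sup)).trans
      (measure_mono hsub)
  · have superlevel_eq_empty {k : ℝ → ℝ≥0∞} (hk : ⨆ x, k x = 1) :
        {x | ENNReal.ofReal t < k x} = ∅ :=
      eq_empty_of_forall_notMem fun x => not_lt.2 ((le_iSup k x).trans (hk.trans_le ht))
    simp [superlevel_eq_empty hf_sup, superlevel_eq_empty hg_sup]

theorem rpow_lintegral_mul_le_lintegral_of_iSup_ne_top (hp : 0 < p) (hq : 0 < q)
    (hpq : p + q = 1) (hf : Measurable f) (hg : Measurable g) (hh : Measurable h)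
    (hf_sup : ⨆ x, f x ≠ ∞) (hg_sup : ⨆ x, g x ≠ ∞)
    (hfgh : ∀ x y, f x ^ p * g y ^ q ≤ h (p • x + q • y)) :
    (∫⁻ x, f x) ^ p * (∫⁻ x, g x) ^ q ≤ ∫⁻ x, h x := by
  set a := ⨆ x, f x with ha
  set b := ⨆ x, g x with hb
  by_cases ha0 : a = 0
  · have hf0 : ∀ x, f x = 0 := by simpa [ha] using ha0
    simp [hf0, hp]
  by_cases hb0 : b = 0
  · have hg0 : ∀ x, g x = 0 := by simpa [hb] using hb0
    simp [hg0, hq]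
  have inv_mul_rpow (u v : ℝ≥0∞) :
      (a⁻¹ * u) ^ p * (b⁻¹ * v) ^ q = (a ^ p * b ^ q)⁻¹ * (u ^ p * v ^ q) := by
    rw [ENNReal.mul_rpow_of_nonneg _ _ hp.le, ENNReal.mul_rpow_of_nonneg _ _ hq.le,
      ENNReal.inv_rpow, ENNReal.inv_rpow, ENNReal.mul_inv (.inl (by simp [ha0, hf_sup]))
        (.inl (by simp [ha0, hf_sup]))]
    ring
  set c := a ^ p * b ^ q with hc
  have hc0 : c ≠ 0 := by simp [hc, ha0, hb0, hf_sup, hg_sup]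
  have hctop : c ≠ ∞ :=
    ENNReal.mul_ne_top (ENNReal.rpow_ne_top_of_nonneg hp.le hf_sup)
      (ENNReal.rpow_ne_top_of_nonneg hq.le hg_sup)
  have hnormalized : ENNReal.ofReal p * (∫⁻ x, a⁻¹ * f x) +
      ENNReal.ofReal q * (∫⁻ x, b⁻¹ * g x) ≤ ∫⁻ x, c⁻¹ * h x := by
    refine ofReal_mul_lintegral_add_le_lintegral_of_iSup_eq_one hp hq (by fun_prop) (by fun_prop)
      (by fun_prop) ?_ ?_ fun x y => ?_
    · rw [← ENNReal.mul_iSup, ← ha, ENNReal.inv_mul_cancel ha0 hf_sup]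
    · rw [← ENNReal.mul_iSup, ← hb, ENNReal.inv_mul_cancel hb0 hg_sup]
    · refine (min_le_rpow_mul_rpow hp hq hpq _ _).trans ?_
      rw [inv_mul_rpow]
      gcongr
      exact hfgh x y
  rw [lintegral_const_mul _ hf, lintegral_const_mul _ hg, lintegral_const_mul _ hh] at hnormalized
  have := (rpow_mul_rpow_le_ofReal_mul_add hp hq hpq _ _).trans hnormalized
  rwa [inv_mul_rpow, ENNReal.mul_le_mul_iff_right (ENNReal.inv_ne_zero.2 hctop)
    (ENNReal.inv_ne_top.2 hc0)] at this

end PrekopaLeindlerReal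

section Definitions

variable {E : Type*} [AddCommMonoid E] [Module ℝ E]

/-- Log-concavity of a nonnegative function, `ρ x ^ p * ρ y ^ q ≤ ρ (p x + q y)` for positive
weights `p + q = 1`; it is used for densities, so values are taken in `ℝ≥0∞`. -/
def IsLogConcave (ρ : E → ℝ≥0∞) : Prop :=
  ∀ ⦃p q : ℝ⦄, 0 < p → 0 < q → p + q = 1 → ∀ x y, ρ x ^ p * ρ y ^ q ≤ ρ (p • x + q • y)

/-- The measure `μ` satisfies the Prékopa–Leindler inequality. This functional form of the
log-concavity of a measure is chosen over the one for sets because it is stable under products. -/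
def PrekopaLeindler [MeasurableSpace E] (μ : Measure E) : Prop :=
  ∀ ⦃p q : ℝ⦄, 0 < p → 0 < q → p + q = 1 → ∀ ⦃f g h : E → ℝ≥0∞⦄,
    Measurable f → Measurable g → Measurable h →
    (∀ x y, f x ^ p * g y ^ q ≤ h (p • x + q • y)) →
    (∫⁻ x, f x ∂μ) ^ p * (∫⁻ x, g x ∂μ) ^ q ≤ ∫⁻ x, h x ∂μ

end Definitions

theorem prekopaLeindler_volume : PrekopaLeindler (volume : Measure ℝ) := by
  intro p q hp hq hpq f g h hf hg hh hfgh
  have rpow_iSup {r : ℝ} (hr : 0 < r) (u : ℕ → ℝ≥0∞) : (⨆ n, u n) ^ r = ⨆ n, u n ^ r :=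
    (ENNReal.orderIsoRpow r hr).map_iSup u
  have iSup_min_ne_top (k : ℝ → ℝ≥0∞) (n : ℕ) : ⨆ x, min (k x) n ≠ ∞ :=
    ne_top_of_le_ne_top (ENNReal.natCast_ne_top n) (iSup_le fun x => min_le_right _ _)
  rw [lintegral_eq_iSup_lintegral_min_natCast hf, lintegral_eq_iSup_lintegral_min_natCast hg,
    rpow_iSup hp, rpow_iSup hq, ENNReal.iSup_mul]
  refine iSup_le fun m => ?_
  rw [ENNReal.mul_iSup]
  refine iSup_le fun n => ?_
  refine rpow_lintegral_mul_le_lintegral_of_iSup_ne_top hp hq hpq (by fun_prop) (by fun_prop) hh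
    (iSup_min_ne_top f m) (iSup_min_ne_top g n) fun x y => le_trans ?_ (hfgh x y)
  gcongr <;> exact min_le_left _ _

namespace PrekopaLeindler

section Monoid

variable {E F : Type*} [AddCommMonoid E] [Module ℝ E] [MeasurableSpace E]
  [AddCommMonoid F] [Module ℝ F] [MeasurableSpace F] {μ : Measure E} {ν : Measure F}

theorem dirac (a : E) : PrekopaLeindler (Measure.dirac a) := by
  intro p q _ _ hpq f g h hf hg hh hfgh
  rw [lintegral_dirac' a hf, lintegral_dirac' a hg, lintegral_dirac' a hh]
  simpa only [← add_smul, hpq, one_smul] using hfgh a a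

theorem withDensity (hμ : PrekopaLeindler μ) {ρ : E → ℝ≥0∞} (hρ : Measurable ρ)
    (hρ_conc : IsLogConcave ρ) : PrekopaLeindler (μ.withDensity ρ) := by
  intro p q hp hq hpq f g h hf hg hh hfgh
  rw [lintegral_withDensity_eq_lintegral_mul _ hρ hf,
    lintegral_withDensity_eq_lintegral_mul _ hρ hg, lintegral_withDensity_eq_lintegral_mul _ hρ hh]
  refine hμ hp hq hpq (hρ.mul hf) (hρ.mul hg) (hρ.mul hh) fun x y => ?_
  calc (ρ x * f x) ^ p * (ρ y * g y) ^ q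
      = (ρ x ^ p * ρ y ^ q) * (f x ^ p * g y ^ q) := by
        rw [ENNReal.mul_rpow_of_nonneg _ _ hp.le, ENNReal.mul_rpow_of_nonneg _ _ hq.le,
          mul_mul_mul_comm]
    _ ≤ ρ (p • x + q • y) * h (p • x + q • y) :=
        mul_le_mul' (hρ_conc hp hq hpq x y) (hfgh x y)

theorem prod [SFinite ν] (hμ : PrekopaLeindler μ) (hν : PrekopaLeindler ν) :
    PrekopaLeindler (μ.prod ν) := by
  intro p q hp hq hpq f g h hf hg hh hfgh
  rw [lintegral_prod _ hf.aemeasurable, lintegral_prod _ hg.aemeasurable,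
    lintegral_prod _ hh.aemeasurable]
  refine hμ hp hq hpq hf.lintegral_prod_right' hg.lintegral_prod_right' hh.lintegral_prod_right'
    fun x x' => ?_
  exact hν hp hq hpq (by fun_prop) (by fun_prop) (by fun_prop)
    fun y y' => hfgh (x, y) (x', y')

theorem measure_rpow_mul_measure_rpow_le (hμ : PrekopaLeindler μ) {p q : ℝ} (hp : 0 < p)
    (hq : 0 < q) (hpq : p + q = 1) {A B C : Set E} (hA : MeasurableSet A) (hB : MeasurableSet B)
    (hC : MeasurableSet C) (hABC : p • A + q • B ⊆ C) : μ A ^ p * μ B ^ q ≤ μ C := by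
  simp only [← lintegral_indicator_one hA, ← lintegral_indicator_one hB,
    ← lintegral_indicator_one hC]
  refine hμ hp hq hpq (measurable_one.indicator hA) (measurable_one.indicator hB)
    (measurable_one.indicator hC) fun x y => ?_
  by_cases hx : x ∈ A
  · by_cases hy : y ∈ B
    · have hxy : p • x + q • y ∈ C :=
        hABC (add_mem_add (smul_mem_smul_set hx) (smul_mem_smul_set hy))
      simp [hx, hy, hxy]
    · simp [hy, hq]
  · simp [hx, hp]

end Monoid

section Group

variable {E F : Type*} [AddCommGroup E] [Module ℝ E] [MeasurableSpace E]
  [AddCommGroup F] [Module ℝ F] [MeasurableSpace F] {μ : Measure E}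

theorem map (hμ : PrekopaLeindler μ) (φ : E →ᵃ[ℝ] F) (hφ : Measurable φ) :
    PrekopaLeindler (μ.map φ) := by
  intro p q hp hq hpq f g h hf hg hh hfgh
  rw [lintegral_map hf hφ, lintegral_map hg hφ, lintegral_map hh hφ]
  refine hμ hp hq hpq (hf.comp hφ) (hg.comp hφ) (hh.comp hφ) fun x y => ?_
  rw [Convex.combo_affine_apply hpq]
  exact hfgh (φ x) (φ y)

theorem measure_preimage_add_right_le [MeasurableAdd E] [MeasurableNeg E] [μ.IsNegInvariant]
    (hμ : PrekopaLeindler μ) {C : Set E} (hC_conv : Convex ℝ C) (hC_symm : C = -C)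
    (hC : MeasurableSet C) (x : E) : μ ((· + x) ⁻¹' C) ≤ μ C := by
  set A : Set E := (· + x) ⁻¹' C
  have hA : MeasurableSet A := measurable_add_const x hC
  have hA_sub : (1 / 2 : ℝ) • A + (1 / 2 : ℝ) • (-A) ⊆ C := by
    rintro _ ⟨_, ⟨y, hy, rfl⟩, _, ⟨z, hz, rfl⟩, rfl⟩
    have hzC : -(-z + x) ∈ C := by
      rw [hC_symm]
      exact neg_mem_neg.2 hz
    convert hC_conv hy hzC one_half_pos.le one_half_pos.le (add_halves 1) using 1
    module
  calc μ A = μ A ^ (1 / 2 : ℝ) * μ (-A) ^ (1 / 2 : ℝ) := by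
        rw [Measure.measure_neg, ← ENNReal.rpow_add_of_nonneg _ _ one_half_pos.le one_half_pos.le,
          add_halves, ENNReal.rpow_one]
    _ ≤ μ C :=
        hμ.measure_rpow_mul_measure_rpow_le one_half_pos one_half_pos (add_halves 1) hA hA.neg hC
          hA_sub

end Group

theorem pi {n : ℕ} {E : Fin n → Type*} [∀ i, AddCommGroup (E i)] [∀ i, Module ℝ (E i)]
    [∀ i, MeasurableSpace (E i)] {μ : ∀ i, Measure (E i)} [∀ i, SigmaFinite (μ i)]
    (hμ : ∀ i, PrekopaLeindler (μ i)) : PrekopaLeindler (Measure.pi μ) := by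
  induction n with
  | zero =>
    rw [Measure.pi_of_empty μ 0]
    exact dirac 0
  | succ n ih =>
    have hcons := (measurePreserving_piFinSuccAbove μ 0).symm
    have hcoe : ⇑(MeasurableEquiv.piFinSuccAbove E 0).symm =
        (Fin.consLinearEquiv ℝ E).toLinearMap.toAffineMap :=
      funext fun z => Fin.insertNth_zero z.1 z.2
    rw [← hcons.map_eq, hcoe]
    exact ((hμ 0).prod (ih fun i => hμ i.succ)).map
      (Fin.consLinearEquiv ℝ E).toLinearMap.toAffineMap (hcoe ▸ hcons.measurable)

end PrekopaLeindler

end PrekopaLeindler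

section Gaussian

open scoped MatrixOrder Matrix

theorem isLogConcave_gaussianPDF (m : ℝ) (v : ℝ≥0) : IsLogConcave (gaussianPDF m v) := by
  intro p q hp hq hpq x y
  have hexp : p * (-(x - m) ^ 2 / (2 * v)) + q * (-(y - m) ^ 2 / (2 * v)) ≤
      -(p * x + q * y - m) ^ 2 / (2 * v) := by
    have hsq : (p * x + q * y - m) ^ 2 ≤ p * (x - m) ^ 2 + q * (y - m) ^ 2 := by
      obtain rfl : q = 1 - p := by linarith
      nlinarith [mul_nonneg (mul_nonneg hp.le hq.le) (sq_nonneg (x - y))]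
    rw [mul_div_assoc', mul_div_assoc', ← add_div]
    gcongr
    linarith
  set c := (√(2 * Real.pi * v))⁻¹ with hc
  have hc0 : 0 ≤ c := by positivity
  rw [gaussianPDF, gaussianPDF, gaussianPDF,
    ENNReal.ofReal_rpow_of_nonneg (gaussianPDFReal_nonneg m v x) hp.le,
    ENNReal.ofReal_rpow_of_nonneg (gaussianPDFReal_nonneg m v y) hq.le,
    ← ENNReal.ofReal_mul (by positivity [gaussianPDFReal_nonneg m v x])]
  refine ENNReal.ofReal_le_ofReal ?_
  simp only [gaussianPDFReal, ← hc, smul_eq_mul]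
  calc (c * Real.exp (-(x - m) ^ 2 / (2 * v))) ^ p * (c * Real.exp (-(y - m) ^ 2 / (2 * v))) ^ q
      = (c ^ p * c ^ q) *
          Real.exp (p * (-(x - m) ^ 2 / (2 * v)) + q * (-(y - m) ^ 2 / (2 * v))) := by
        rw [Real.mul_rpow hc0 (Real.exp_nonneg _), Real.mul_rpow hc0 (Real.exp_nonneg _),
          ← Real.exp_mul, ← Real.exp_mul, mul_mul_mul_comm, ← Real.exp_add, mul_comm p,
          mul_comm q]
    _ = c * Real.exp (p * (-(x - m) ^ 2 / (2 * v)) + q * (-(y - m) ^ 2 / (2 * v))) := by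
        rw [← Real.rpow_add_of_nonneg hc0 hp.le hq.le, hpq, Real.rpow_one]
    _ ≤ c * Real.exp (-(p * x + q * y - m) ^ 2 / (2 * v)) := by gcongr

theorem prekopaLeindler_gaussianReal (m : ℝ) (v : ℝ≥0) : PrekopaLeindler (gaussianReal m v) := by
  by_cases hv : v = 0
  · rw [hv, gaussianReal_zero_var]
    exact PrekopaLeindler.dirac m
  · rw [gaussianReal_of_var_ne_zero m hv]
    exact prekopaLeindler_volume.withDensity (measurable_gaussianPDF m v)
      (isLogConcave_gaussianPDF m v)

theorem exists_posSemidef_eq_multivariateGaussian {ι : Type*} [Fintype ι] [DecidableEq ι]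
    (μ : Measure (EuclideanSpace ℝ ι)) [IsGaussian μ] :
    ∃ S : Matrix ι ι ℝ, S.PosSemidef ∧ μ = multivariateGaussian μ[id] S := by
  set b := (EuclideanSpace.basisFun ι ℝ).toBasis
  set S := LinearMap.BilinForm.toMatrix b (covarianceBilin μ).toBilinForm
  have hS_apply (x y : EuclideanSpace ℝ ι) : covarianceBilin μ x y = x ⬝ᵥ S *ᵥ y :=
    LinearMap.BilinForm.apply_eq_dotProduct_toMatrix_mulVec b _ x y
  have hS : S.PosSemidef := by
    refine .of_dotProduct_mulVec_nonneg (Matrix.IsHermitian.ext fun i j => ?_) fun x => ?_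
    · exact covarianceBilin_comm _ _
    · rw [star_trivial]
      exact (covarianceBilin_self_nonneg (WithLp.toLp 2 x)).trans_eq (hS_apply _ _)
  refine ⟨S, hS, IsGaussian.ext integral_id_multivariateGaussian'.symm ?_⟩
  ext x y
  rw [covarianceBilin_multivariateGaussian hS]
  exact hS_apply x y

theorem prekopaLeindler_multivariateGaussian {n : ℕ} (m : EuclideanSpace ℝ (Fin n))
    (S : Matrix (Fin n) (Fin n) ℝ) : PrekopaLeindler (multivariateGaussian m S) := by
  have hstd : PrekopaLeindler (stdGaussian (EuclideanSpace ℝ (Fin n))) := by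
    rw [← map_pi_eq_stdGaussian]
    exact (PrekopaLeindler.pi fun _ => prekopaLeindler_gaussianReal 0 1).map
      (WithLp.linearEquiv 2 ℝ (Fin n → ℝ)).symm.toLinearMap.toAffineMap
      (WithLp.measurable_toLp 2 (Fin n → ℝ))
  exact hstd.map (AffineMap.const ℝ _ m +
    (Matrix.toEuclideanCLM (𝕜 := ℝ) (CFC.sqrt S)).toLinearMap.toAffineMap)
    (by fun_prop : Measurable fun x => m + Matrix.toEuclideanCLM (𝕜 := ℝ) (CFC.sqrt S) x)

section NormedSpace

variable {E : Type*} [NormedAddCommGroup E] [NormedSpace ℝ E] [MeasurableSpace E] [BorelSpace E]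

theorem prekopaLeindler_of_isGaussian [FiniteDimensional ℝ E] (μ : Measure E) [IsGaussian μ] :
    PrekopaLeindler μ := by
  let e := toEuclidean (E := E)
  obtain ⟨S, -, hS⟩ := exists_posSemidef_eq_multivariateGaussian (μ.map e)
  have hμ : μ = (μ.map e).map e.symm := by
    rw [Measure.map_map (by fun_prop) (by fun_prop), e.symm_comp_self, Measure.map_id]
  rw [hμ, hS]
  exact (prekopaLeindler_multivariateGaussian _ S).map e.symm.toLinearMap.toAffineMap
    e.symm.continuous.measurable

theorem isNegInvariant_of_forall_map_strongDual [SecondCountableTopology E] [CompleteSpace E]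
    {μ : Measure E} [IsFiniteMeasure μ]
    (hμ : ∀ L : StrongDual ℝ E, (μ.map L).IsNegInvariant) : μ.IsNegInvariant := by
  have : IsFiniteMeasure μ.neg := Measure.isFiniteMeasure_map μ _
  refine ⟨Measure.ext_of_charFunDual (funext fun L => ?_)⟩
  have hL : (μ.neg).map L = (μ.map L).neg := by
    rw [Measure.neg_def, Measure.neg_def, Measure.map_map (by fun_prop) (by fun_prop),
      Measure.map_map (by fun_prop) (by fun_prop)]
    exact congrArg (μ.map ·) (funext fun y => map_neg L y)
  rw [charFunDual_eq_charFun_map_one, charFunDual_eq_charFun_map_one, hL, Measure.neg_eq_self]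

end NormedSpace

theorem isNegInvariant_gaussianReal_zero (v : ℝ≥0) : (gaussianReal 0 v).IsNegInvariant :=
  ⟨gaussianReal_map_neg.trans (by rw [neg_zero])⟩

end Gaussian

theorem stmt11_general {Ω : Type*} [MeasurableSpace Ω] {P : Measure Ω} {E : Type*}
    [NormedAddCommGroup E] [NormedSpace ℝ E] [FiniteDimensional ℝ E] [MeasurableSpace E]
    [BorelSpace E] {X : Ω → E} (hX : AEMeasurable X P)
    (hX_gauss : ∀ l : E →L[ℝ] ℝ, ∃ v : ℝ≥0, P.map (fun ω => l (X ω)) = gaussianReal 0 v)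
    {C : Set E} (hC_conv : Convex ℝ C) (hC_symm : C = -C) (hC : MeasurableSet C) (x : E) :
    P {ω | X ω + x ∈ C} ≤ P {ω | X ω ∈ C} := by
  have hmap (l : E →L[ℝ] ℝ) : ∃ v : ℝ≥0, (P.map X).map l = gaussianReal 0 v := by
    rw [AEMeasurable.map_map_of_aemeasurable (by fun_prop) hX]
    exact hX_gauss l
  have hgauss : IsGaussian (P.map X) := isGaussian_of_map_eq_gaussianReal fun l => ⟨0, hmap l⟩
  have hneg : (P.map X).IsNegInvariant := isNegInvariant_of_forall_map_strongDual fun l => by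
    obtain ⟨v, hv⟩ := hmap l
    rw [hv]
    exact isNegInvariant_gaussianReal_zero v
  have key := (prekopaLeindler_of_isGaussian (P.map X)).measure_preimage_add_right_le
    hC_conv hC_symm hC x
  rwa [Measure.map_apply_of_aemeasurable hX (measurable_add_const x hC),
    Measure.map_apply_of_aemeasurable hX hC] at key

/-- Anderson's inequality: if `X` is a centered Gaussian random vector in `ℝᵈ`
and `C` is a symmetric convex Borel set, then `P{X + x ∈ C} ≤ P{X ∈ C}`. -/
theorem stmt11 {Ω : Type*} [MeasureSpace Ω] [IsProbabilityMeasure (ℙ : Measure Ω)]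
    {d : ℕ} (X : Ω → (Fin d → ℝ)) (hXmeas : Measurable X)
    (hXgauss : ∀ l : (Fin d → ℝ) →L[ℝ] ℝ, ∃ v : ℝ≥0,
      Measure.map (fun ω => l (X ω)) ℙ = gaussianReal 0 v)
    (C : Set (Fin d → ℝ)) (hCconv : Convex ℝ C) (hCsym : C = -C)
    (hCmeas : MeasurableSet C) (x : Fin d → ℝ) :
    ℙ {ω | X ω + x ∈ C} ≤ ℙ {ω | X ω ∈ C} :=
  stmt11_general hXmeas.aemeasurable hXgauss hCconv hCsym hCmeas x
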